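/- Let Ω be a factor set on Fin n. In the real vector space of functions from {nonempty subsets of Fin n} to ℝ, define for each nonempty subset ν of Fin n the vectors α_ν and β_ν by α_ν(μ) = 1 if ν ⊆ μ and 0 otherwise, and β_ν(μ) = 1 if ν ∩ μ ≠ ∅ and 0 otherwise. Then the linear span of {α_ν : ν ∈ Ω} equals the linear span of {β_ν : ν ∈ Ω}. -/

import Mathlib

/-!
Fix a set `t` and let `x i = 1` if `i ∈ t` and `x i = 0` otherwise. Then `α_ν(t) = ∏ i ∈ ν, x i`
and `β_ν(t) = 1 - ∏ i ∈ ν, (1 - x i)`. Expanding the products gives, for nonempty `ν`, the two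
mutually inverse inclusion-exclusion formulas
`β_ν = ∑ (-1)^(|s|+1) α_s` and `α_ν = ∑ (-1)^(|s|+1) β_s`,
both over nonempty `s ⊆ ν` (`hit_eq_sum` and `subset_eq_sum`). Since a factor set contains every
nonempty subset of each of its members, each family lies in the span of the other.
-/

lemma one_sub_prod_one_sub {ι : Type*} [DecidableEq ι] (ν : Finset ι) (f : ι → ℝ) :
    1 - ∏ i ∈ ν, (1 - f i) =
      ∑ s ∈ ν.powerset.erase ∅, (-1 : ℝ) ^ (s.card + 1) * ∏ i ∈ s, f i := by
  have h : ∏ i ∈ ν, (1 - f i) = ∑ s ∈ ν.powerset, (-1 : ℝ) ^ s.card * ∏ i ∈ s, f i := by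
    simp_rw [sub_eq_add_neg, Finset.prod_one_add, Finset.prod_neg]
  rw [h, ← Finset.add_sum_erase _ _ (Finset.empty_mem_powerset ν)]
  simp [pow_succ]

lemma subset_indicator_eq_prod {ι : Type*} [DecidableEq ι] (ν t : Finset ι) :
    (if ν ⊆ t then (1 : ℝ) else 0) = ∏ i ∈ ν, if i ∈ t then (1 : ℝ) else 0 := by
  rw [Finset.prod_ite_zero]
  simp [Finset.subset_iff]

lemma hit_indicator_eq_prod {ι : Type*} [DecidableEq ι] (ν t : Finset ι) :
    (if (ν ∩ t).Nonempty then (1 : ℝ) else 0) =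
      1 - ∏ i ∈ ν, (1 - if i ∈ t then (1 : ℝ) else 0) := by
  have h : ∀ i, (1 - if i ∈ t then (1 : ℝ) else 0) = if i ∉ t then 1 else 0 := by
    intro i
    split_ifs <;> simp_all
  simp_rw [h, Finset.prod_ite_zero, Finset.prod_const_one]
  by_cases hν : (ν ∩ t).Nonempty
  · have : ¬ ∀ i ∈ ν, i ∉ t := by
      obtain ⟨i, hi⟩ := hν
      rw [Finset.mem_inter] at hi
      exact fun H => H i hi.1 hi.2
    rw [if_pos hν, if_neg this, sub_zero]
  · have : ∀ i ∈ ν, i ∉ t := fun i hi hit => hν ⟨i, Finset.mem_inter.2 ⟨hi, hit⟩⟩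
    rw [if_neg hν, if_pos this, sub_self]

/-- Inclusion-exclusion: `β_ν` as a combination of the `α_s`. -/
lemma hit_eq_sum {ι : Type*} [DecidableEq ι] (ν t : Finset ι) :
    (if (ν ∩ t).Nonempty then (1 : ℝ) else 0) =
      ∑ s ∈ ν.powerset.erase ∅, (-1 : ℝ) ^ (s.card + 1) * if s ⊆ t then (1 : ℝ) else 0 := by
  simp_rw [subset_indicator_eq_prod]
  rw [hit_indicator_eq_prod, one_sub_prod_one_sub]

/-- Inclusion-exclusion: `α_ν` as a combination of the `β_s`. -/
lemma subset_eq_sum {ι : Type*} [DecidableEq ι] (ν t : Finset ι) (hν : ν.Nonempty) :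
    (if ν ⊆ t then (1 : ℝ) else 0) =
      ∑ s ∈ ν.powerset.erase ∅,
        (-1 : ℝ) ^ (s.card + 1) * if (s ∩ t).Nonempty then (1 : ℝ) else 0 := by
  have h := one_sub_prod_one_sub ν (fun i => 1 - if i ∈ t then (1 : ℝ) else 0)
  -- The signs sum to `1` because `ν` is nonempty.
  have h1 := one_sub_prod_one_sub ν (fun _ => (1 : ℝ))
  simp only [sub_self, Finset.prod_const, zero_pow hν.card_pos.ne', one_pow, mul_one,
    sub_zero] at h1
  simp only [sub_sub_cancel] at h
  simp_rw [hit_indicator_eq_prod, mul_sub, mul_one]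
  rw [Finset.sum_sub_distrib, ← h1, ← h, subset_indicator_eq_prod, sub_sub_cancel]

lemma span_image_le_of_eq_sum {ι M : Type*} [DecidableEq ι] [AddCommGroup M] [Module ℝ M]
    (Ω : Set (Finset ι)) (hdc : ∀ ν ∈ Ω, ∀ μ ⊆ ν, μ.Nonempty → μ ∈ Ω)
    (a b : Finset ι → M)
    (h : ∀ ν ∈ Ω, a ν = ∑ s ∈ ν.powerset.erase ∅, (-1 : ℝ) ^ (s.card + 1) • b s) :
    Submodule.span ℝ (a '' Ω) ≤ Submodule.span ℝ (b '' Ω) := by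
  rw [Submodule.span_le]
  rintro _ ⟨ν, hν, rfl⟩
  rw [h ν hν]
  refine Submodule.sum_mem _ fun s hs => Submodule.smul_mem _ _ (Submodule.subset_span ?_)
  rw [Finset.mem_erase, Finset.mem_powerset] at hs
  exact ⟨s, hdc ν hν s hs.2 (Finset.nonempty_iff_ne_empty.2 hs.1), rfl⟩

/-- For a factor set `Ω` on `Fin n` (members nonempty, downward closed), the span of
the vectors `α_ν (μ) = [ν ⊆ μ]` over `ν ∈ Ω` equals the span of the vectors
`β_ν (μ) = [ν ∩ μ ≠ ∅]` over `ν ∈ Ω`, inside the space of real functions on the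
nonempty subsets of `Fin n`. -/
theorem factor_set_span_eq (n : ℕ) (Ω : Set (Finset (Fin n)))
    (hne : ∀ ν ∈ Ω, ν.Nonempty)
    (hdc : ∀ ν ∈ Ω, ∀ μ ⊆ ν, μ.Nonempty → μ ∈ Ω) :
    Submodule.span ℝ
        ((fun ν : Finset (Fin n) =>
          (fun t : {t : Finset (Fin n) // t.Nonempty} =>
            if ν ⊆ t.1 then (1 : ℝ) else 0)) '' Ω) =
      Submodule.span ℝ
        ((fun ν : Finset (Fin n) =>
          (fun t : {t : Finset (Fin n) // t.Nonempty} =>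
            if (ν ∩ t.1).Nonempty then (1 : ℝ) else 0)) '' Ω) := by
  apply le_antisymm
  · refine span_image_le_of_eq_sum Ω hdc _ _ fun ν hν => ?_
    funext t
    simpa only [Finset.sum_apply, Pi.smul_apply, smul_eq_mul] using
      subset_eq_sum ν t.1 (hne ν hν)
  · refine span_image_le_of_eq_sum Ω hdc _ _ fun ν _ => ?_
    funext t
    simpa only [Finset.sum_apply, Pi.smul_apply, smul_eq_mul] using hit_eq_sum ν t.1
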